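/- Proposition 5.1 (quantitative active-regime upper bound, conditional on the spectral gap). Consider the East model or the FA-1f model (either boundary choice) in dimension 1 at density ρ∈(0,1), and assume S>0 is a uniform spectral gap lower bound for the model on finite intervals with empty right boundary condition (in particular 𝒟_N(g)≥S·Var_ν(g) on Ω_N for every N). Then there exists C<∞ such that for every δ>0 and every α > α₀ := −S/(4𝔸) there is N̄(δ,α)<∞ such that for all N ≥ N̄: φ^{(N)}(α/N) ≤ 𝔸·α + C·δ + C·|α|/√N + C·α²/√N. -/

import Mathlib

/-!
It suffices to show `limsup φ^{(N)}(α/N) ≤ 𝔸α`; the statement then holds with `C = 1`, the terms in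
`1/√N` being nonnegative. Write `f = g²` with `ν(g²) = 1` (`phi_le`) and expand the exponentials at
`α/N`: the functional is `𝔸α + (α/N) ν(g² (𝓗 − 𝔸N)) − 𝒟(g)` up to `o(1)` and a factor
`1 + o(1)` in front of `𝒟(g)`.

For `α > 0` cut `[0, N)` into blocks of fixed length `K`. In a block, condition on the position of
the rightmost empty site. The sites on its left see an empty right boundary, so the spectral gap
applies to them conditionally on all the others; the sites on its right are filled, and hence cannot
move except at the extremities. Replacing `g` by its conditional mean on the left part costs
`K(K+1)/S` times the Dirichlet form of the block, and after that the block activity has mean at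
most `𝔸K + O(1)` (`expect_block_le`). Summing over blocks (`expect_tact_le`) gives
`ν(g² (𝓗 − 𝔸N)) ≤ O(N/K + 1) + O(K²) 𝒟(g)`. Multiplied by `α/N` the first term is `O(α/K)`, and the
second is absorbed by `−𝒟(g)` when `N` is large. Then `K` is taken large.

For `α ≤ 0` use the gap on the whole interval, `S (1 − ν(g)²) ≤ 𝒟(g)`. Write `g = ν(g) + h`. As
`𝓗 ≥ 0`, the term in `h²` loses at most `𝔸N ν(h²)`, while the others are `o(N)` because the variance
of `𝓗` is `O(N)` (`expect_tact_sq_le`, `neg_expect_tact_le`). The total loss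
`|α| 𝔸 (1 − ν(g)²) + o(1)` is then absorbed by the Dirichlet form, since `|α| 𝔸 < S/4`.
-/

open Finset Filter

open scoped Classical

/-- A configuration on the box `{1,…,N}` (0-indexed by `Fin N`). -/
abbrev Config (N : ℕ) := Fin N → Bool

/-- Occupation variable `η_i ∈ {0,1}` as a real number. -/
noncomputable def occ {N : ℕ} (η : Config N) (i : Fin N) : ℝ := if η i then 1 else 0

/-- Bernoulli(ρ) product weight of a configuration. -/
noncomputable def bern (ρ : ℝ) {N : ℕ} (η : Config N) : ℝ :=
  ∏ i, (if η i then ρ else 1 - ρ)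

/-- Expectation under the Bernoulli(ρ) product measure `ν`. -/
noncomputable def expect (ρ : ℝ) {N : ℕ} (f : Config N → ℝ) : ℝ :=
  ∑ η : Config N, bern ρ η * f η

/-- The configuration `η^i`, obtained by flipping `η` at site `i`. -/
def flipAt {N : ℕ} (η : Config N) (i : Fin N) : Config N :=
  Function.update η i (!η i)

/-- Occupation at the 1-indexed position `k ∈ {0,…,N+1}`, with boundary value
`bl` at `k = 0` and `br` at `k = N+1` (and beyond). -/
noncomputable def occAt {N : ℕ} (η : Config N) (bl br : ℝ) (k : ℕ) : ℝ :=
  if hk : k = 0 then bl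
  else if h : k ≤ N then (if η ⟨k - 1, by omega⟩ then 1 else 0) else br

/-- The three kinetically constrained models considered: East (empty right boundary),
FA-1f with two empty boundaries, FA-1f with one empty (right) boundary. -/
inductive KCM | east | fa2 | fa1

/-- The kinetic constraint `r_i(η)` of each model, at the (0-indexed) site `i`. -/
noncomputable def constr (m : KCM) {N : ℕ} (η : Config N) (i : Fin N) : ℝ :=
  match m with
  | KCM.east => 1 - occAt η 0 0 (i.1 + 2)
  | KCM.fa2  => 1 - occAt η 0 0 i.1 * occAt η 0 0 (i.1 + 2)
  | KCM.fa1  => 1 - occAt η 1 0 i.1 * occAt η 1 0 (i.1 + 2)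

/-- The jump rate `c_i(η) = r_i(η)·[η_i(1−ρ)+(1−η_i)ρ]`. -/
noncomputable def crate (m : KCM) (ρ : ℝ) {N : ℕ} (η : Config N) (i : Fin N) : ℝ :=
  constr m η i * (if η i then 1 - ρ else ρ)

/-- The escape rate `𝓗(η) = Σ_i c_i(η)`. -/
noncomputable def escRate (m : KCM) (ρ : ℝ) {N : ℕ} (η : Config N) : ℝ :=
  ∑ i, crate m ρ η i

/-- The Dirichlet form `𝒟_N(g) = Σ_i ν(c_i(η)(g(η^i)−g(η))²)`. -/
noncomputable def dirichlet (m : KCM) (ρ : ℝ) {N : ℕ} (g : Config N → ℝ) : ℝ :=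
  ∑ i, expect ρ (fun η => crate m ρ η i * (g (flipAt η i) - g η) ^ 2)

/-- The rescaled cumulant generating function `φ^{(N)}(λ)`, via the
Donsker–Varadhan variational (principal eigenvalue) formula. -/
noncomputable def phi (m : KCM) (ρ : ℝ) (N : ℕ) (lam : ℝ) : ℝ :=
  sSup { x | ∃ f : Config N → ℝ, (∀ η, 0 ≤ f η) ∧ expect ρ f = 1 ∧
    x = (Real.exp lam - 1) * expect ρ (fun η => f η * escRate m ρ η)
        - Real.exp lam * dirichlet m ρ (fun η => Real.sqrt (f η)) }

/-- The mean instantaneous activity `𝔸 = ν(c_j)` at an interior site `j`: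
`2ρ(1−ρ)²` for East and `2ρ(1−ρ)(1−ρ²)` for FA-1f. -/
noncomputable def meanAct (m : KCM) (ρ : ℝ) : ℝ :=
  match m with
  | KCM.east => 2 * ρ * (1 - ρ) ^ 2
  | _ => 2 * ρ * (1 - ρ) * (1 - ρ ^ 2)

/-- The two-boundary interface energy `Σ_{L,L'}` for FA-1f with two empty
boundaries: the infimum of `𝒟_{L+L'+2}(√f)` over probability densities `f`
with `ν(f·η_{L+1}η_{L+2}) = 1`. -/
noncomputable def SigmaTwo (ρ : ℝ) (L L' : ℕ) : ℝ :=
  sInf { x | ∃ f : Config (L + L' + 2) → ℝ, (∀ η, 0 ≤ f η) ∧ expect ρ f = 1 ∧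
    expect ρ (fun η => f η * occ η ⟨L, by omega⟩ * occ η ⟨L + 1, by omega⟩) = 1 ∧
    x = dirichlet KCM.fa2 ρ (fun η => Real.sqrt (f η)) }

/-- The one-boundary interface energy `Σ_L`: the infimum of `𝒟_L(√f)`
over probability densities `f` with `ν(f·η_1) = 1`, for the model `m`. -/
noncomputable def SigmaOne (m : KCM) (ρ : ℝ) (L : ℕ) : ℝ :=
  sInf { x | ∃ f : Config L → ℝ, (∀ η, 0 ≤ f η) ∧ expect ρ f = 1 ∧
    expect ρ (fun η => f η * occAt η 0 0 1) = 1 ∧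
    x = dirichlet m ρ (fun η => Real.sqrt (f η)) }
/-- The rate `c_k(η)` at the 0-indexed site `k : ℕ` (`0` if `k` is out of range). -/
noncomputable def crateNat (m : KCM) (ρ : ℝ) {N : ℕ} (η : Config N) (k : ℕ) : ℝ :=
  if h : k < N then crate m ρ η ⟨k, h⟩ else 0

/-- The constraint `r_k(η)` at the 0-indexed site `k : ℕ` (`0` if `k` is out of range). -/
noncomputable def constrNat (m : KCM) {N : ℕ} (η : Config N) (k : ℕ) : ℝ :=
  if h : k < N then constr m η ⟨k, h⟩ else 0

/-- The (0-indexed) block `B_{b+1} = {bK+1,…,(b+1)K}` is completely filled. -/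
def blockFull {N : ℕ} (K b : ℕ) (η : Config N) : Prop :=
  ∀ x : Fin N, b * K ≤ x.1 → x.1 < (b + 1) * K → η x = true

/-- The (0-indexed) block `B_{b+1}` contains at least one empty site. -/
def blockHasZero {N : ℕ} (K b : ℕ) (η : Config N) : Prop :=
  ∃ x : Fin N, b * K ≤ x.1 ∧ x.1 < (b + 1) * K ∧ η x = false

/-- The 0-indexed offsets (within a block of size `K`) of the sites of `B̃_i`,
whose constraint only depends on the configuration inside the block:
all but the last site for East, all but the first and last sites for FA-1f. -/
def interiorIdx (m : KCM) (K : ℕ) : Finset ℕ :=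
  match m with
  | KCM.east => Finset.range (K - 1)
  | _ => Finset.Ioo 0 (K - 1)

/-- The block activity `𝓗_i(η) = Σ_{x∈B̃_i} c_x(η)` for the 0-indexed block `b`. -/
noncomputable def blockAct (m : KCM) (ρ : ℝ) {N : ℕ} (K b : ℕ) (η : Config N) : ℝ :=
  ∑ j ∈ interiorIdx m K, crateNat m ρ η (b * K + j)

/-- The block density `𝓡_i(η) = K^{-1} Σ_{x∈B_i} η_x` for the 0-indexed block `b`. -/
noncomputable def blockDens {N : ℕ} (K b : ℕ) (η : Config N) : ℝ :=
  (∑ j ∈ Finset.range K, occAt η 0 0 (b * K + j + 1)) / K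

/-- The activity-density label `u^i_{K,ε}(η)` of the 0-indexed block `b`. -/
noncomputable def label (m : KCM) (ρ ε : ℝ) {N : ℕ} (K : ℕ) (η : Config N) (b : ℕ) : ℤ :=
  if blockFull K b η then 1
  else if |blockAct m ρ K b η - meanAct m ρ * ((interiorIdx m K).card : ℝ)| ≤ ε * K ∧
          |blockDens K b η - ρ| ≤ ε then -1
  else 0

/-- Indicator of the event `𝓔_i = {u^i_{K,ε} ∈ {0,1}}` for the 0-indexed block `b`. -/
noncomputable def indE (m : KCM) (ρ ε : ℝ) {N : ℕ} (K : ℕ) (η : Config N) (b : ℕ) : ℝ :=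
  if label m ρ ε K η b ≠ -1 then 1 else 0

/-- Indicator of the event `𝓩_i` that the 0-indexed block `b` has an empty site. -/
noncomputable def indZ {N : ℕ} (K : ℕ) (η : Config N) (b : ℕ) : ℝ :=
  if blockHasZero K b η then 1 else 0

/-- The function `V(η) = Σ_{i=1}^{N/K−1} 1_{𝓔_i}1_{𝓩_{i+1}} + 1_{𝓔_{N/K}}`. -/
noncomputable def Vfun (m : KCM) (ρ ε : ℝ) {N : ℕ} (K : ℕ) (η : Config N) : ℝ :=
  (∑ b ∈ Finset.range (N / K - 1), indE m ρ ε K η b * indZ K η (b + 1))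
    + indE m ρ ε K η (N / K - 1)

/-- Conditional expectation in the coordinates of `B` w.r.t. Bernoulli(ρ),
the coordinates outside `B` being held fixed. -/
noncomputable def condExp (ρ : ℝ) {N : ℕ} (B : Finset (Fin N)) (g : Config N → ℝ)
    (η : Config N) : ℝ :=
  ∑ ζ : {x // x ∈ B} → Bool,
    (∏ i : {x // x ∈ B}, (if ζ i then ρ else 1 - ρ)) *
      g (fun j => if h : j ∈ B then ζ ⟨j, h⟩ else η j)

/-- Conditional variance `Var_B(g)(η)` in the coordinates of `B`. -/
noncomputable def condVar (ρ : ℝ) {N : ℕ} (B : Finset (Fin N)) (g : Config N → ℝ)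
    (η : Config N) : ℝ :=
  condExp ρ B (fun σ => g σ ^ 2) η - (condExp ρ B g η) ^ 2

/-- The 0-indexed block `b` as a `Finset (Fin N)`. -/
def blockSet (N K b : ℕ) : Finset (Fin N) :=
  Finset.univ.filter fun x => b * K ≤ x.1 ∧ x.1 < (b + 1) * K

/-- The model whose Dirichlet form on finite intervals with empty right boundary
condition appears in the uniform spectral gap hypothesis: East for East,
FA-1f with one empty (right) boundary for FA-1f. -/
def gapModel : KCM → KCM
  | KCM.east => KCM.east
  | _ => KCM.fa1


/-! ### The product expectation -/

lemma bern_nonneg' {ρ : ℝ} (h0 : 0 < ρ) (h1 : ρ < 1) {N : ℕ} (η : Config N) :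
    0 ≤ bern ρ η := by
  unfold bern
  refine Finset.prod_nonneg fun i _ => ?_
  split_ifs <;> linarith

lemma sum_bern (ρ : ℝ) (N : ℕ) : ∑ η : Config N, bern ρ η = 1 := by
  have h := Finset.prod_univ_sum (fun _ : Fin N => (Finset.univ : Finset Bool))
    (fun _ b => if b then ρ else 1 - ρ)
  rw [Fintype.piFinset_univ] at h
  unfold bern
  rw [← h]
  simp

lemma nu_const (ρ : ℝ) (N : ℕ) (c : ℝ) : expect ρ (fun _ : Config N => c) = c := by
  unfold _root_.expect
  rw [← Finset.sum_mul, sum_bern, one_mul]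

lemma nu_mono {ρ : ℝ} (h0 : 0 < ρ) (h1 : ρ < 1) {N : ℕ} {f g : Config N → ℝ}
    (h : ∀ η, f η ≤ g η) : expect ρ f ≤ expect ρ g :=
  Finset.sum_le_sum fun η _ => mul_le_mul_of_nonneg_left (h η) (bern_nonneg' h0 h1 η)

lemma nu_nonneg {ρ : ℝ} (h0 : 0 < ρ) (h1 : ρ < 1) {N : ℕ} {f : Config N → ℝ}
    (h : ∀ η, 0 ≤ f η) : 0 ≤ expect ρ f :=
  Finset.sum_nonneg fun η _ => mul_nonneg (bern_nonneg' h0 h1 η) (h η)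

lemma nu_add (ρ : ℝ) {N : ℕ} (f g : Config N → ℝ) :
    expect ρ (fun η => f η + g η) = expect ρ f + expect ρ g := by
  simp only [_root_.expect, mul_add, Finset.sum_add_distrib]

lemma nu_const_mul (ρ : ℝ) {N : ℕ} (c : ℝ) (f : Config N → ℝ) :
    expect ρ (fun η => c * f η) = c * expect ρ f := by
  simp only [_root_.expect, Finset.mul_sum]
  exact Finset.sum_congr rfl fun η _ => by ring

lemma nu_sum (ρ : ℝ) {N : ℕ} {ι : Type*} (s : Finset ι) (f : ι → Config N → ℝ) :
    expect ρ (fun η => ∑ i ∈ s, f i η) = ∑ i ∈ s, expect ρ (f i) := by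
  simp only [_root_.expect, Finset.mul_sum]
  exact Finset.sum_comm

lemma bern_split (ρ : ℝ) {N j : ℕ} {e : Fin j → Fin N} (he : Function.Injective e)
    (η : Config N) :
    bern ρ η = bern ρ (η ∘ e) *
      ∏ i ∈ Finset.univ.filter (fun i => i ∉ Set.range e), (if η i then ρ else 1 - ρ) := by
  unfold bern
  rw [← Finset.prod_filter_mul_prod_filter_not Finset.univ (fun i => i ∈ Set.range e)]
  congr 1
  have : Finset.univ.filter (fun i => i ∈ Set.range e) = Finset.univ.image e := by
    ext i; simp
  rw [this, Finset.prod_image (fun a _ b _ h => he h)]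
  rfl

/-- Exchanging the coordinates in the range of `e` between the two configurations of a pair
preserves the product weight. -/
lemma bern_swap (ρ : ℝ) {N j : ℕ} {e : Fin j → Fin N} (he : Function.Injective e)
    (η : Config N) (ζ : Config j) :
    bern ρ (Function.extend e ζ η) * bern ρ (η ∘ e) = bern ρ η * bern ρ ζ := by
  rw [bern_split ρ he η, bern_split ρ he (Function.extend e ζ η),
    show Function.extend e ζ η ∘ e = ζ from funext fun k => he.extend_apply _ _ _]
  have : ∏ i ∈ Finset.univ.filter (fun i => i ∉ Set.range e),
        (if Function.extend e ζ η i then ρ else 1 - ρ) =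
      ∏ i ∈ Finset.univ.filter (fun i => i ∉ Set.range e), (if η i then ρ else 1 - ρ) := by
    refine Finset.prod_congr rfl fun i hi => ?_
    rw [Function.extend_apply' _ _ _ (by simpa using hi)]
  rw [this]; ring

/-- Resampling the coordinates in the range of `e` leaves the product measure invariant. -/
lemma expect_extend (ρ : ℝ) {N j : ℕ} {e : Fin j → Fin N} (he : Function.Injective e)
    (F : Config N → ℝ) :
    expect ρ F = expect ρ (fun η => expect ρ (fun ζ : Config j => F (Function.extend e ζ η))) := by
  have hΦ : Function.Involutive (fun p : Config N × Config j =>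
      ((Function.extend e p.2 p.1, p.1 ∘ e) : Config N × Config j)) := by
    rintro ⟨η, ζ⟩
    ext i
    · by_cases hi : ∃ k, e k = i
      · obtain ⟨k, rfl⟩ := hi
        simp [he.extend_apply]
      · simp [Function.extend_apply' _ _ _ hi]
    · simp [he.extend_apply]
  calc expect ρ F = ∑ η : Config N, ∑ ζ : Config j, bern ρ η * bern ρ ζ * F η := by
        refine Finset.sum_congr rfl fun η _ => ?_
        rw [← Finset.sum_mul, ← Finset.mul_sum, sum_bern, mul_one]
    _ = ∑ p : Config N × Config j, bern ρ p.1 * bern ρ p.2 * F p.1 := by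
        rw [Fintype.sum_prod_type]
    _ = ∑ p : Config N × Config j, bern ρ p.1 * bern ρ p.2 * F (Function.extend e p.2 p.1) := by
        rw [← Equiv.sum_comp (hΦ.toPerm _)]
        refine Finset.sum_congr rfl fun p _ => ?_
        change bern ρ (Function.extend e p.2 p.1) * bern ρ (p.1 ∘ e) * _ = _
        rw [bern_swap ρ he]
        rfl
    _ = _ := by
        rw [Fintype.sum_prod_type]
        refine Finset.sum_congr rfl fun η _ => ?_
        simp only [_root_.expect, Finset.mul_sum, mul_assoc]

/-! ### The jump rates -/

lemma occAt_succ {N : ℕ} (η : Config N) (bl br : ℝ) {k : ℕ} (h : k < N) :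
    occAt η bl br (k + 1) = if η ⟨k, h⟩ then 1 else 0 := by
  unfold occAt
  rw [dif_neg (by omega), dif_pos (by omega)]
  rfl

lemma occAt_right {N : ℕ} (η : Config N) (bl br : ℝ) {k : ℕ} (h : N < k) :
    occAt η bl br k = br := by
  unfold occAt
  rw [dif_neg (by omega), dif_neg (by omega)]

lemma occAt_nonneg {N : ℕ} (η : Config N) {bl br : ℝ} (h : 0 ≤ bl) (h' : 0 ≤ br) (k : ℕ) :
    0 ≤ occAt η bl br k := by
  unfold occAt
  split_ifs <;> simp [h, h']

lemma occAt_le_one {N : ℕ} (η : Config N) {bl br : ℝ} (h : bl ≤ 1) (h' : br ≤ 1) (k : ℕ) :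
    occAt η bl br k ≤ 1 := by
  unfold occAt
  split_ifs <;> simp [h, h']

lemma constr_mem (m : KCM) {N : ℕ} (η : Config N) (i : Fin N) :
    0 ≤ constr m η i ∧ constr m η i ≤ 1 := by
  have a1 := occAt_nonneg η (le_refl (0 : ℝ)) (le_refl (0 : ℝ))
  have a2 := occAt_le_one η (zero_le_one (α := ℝ)) (zero_le_one (α := ℝ))
  have a3 := occAt_nonneg η (zero_le_one (α := ℝ)) (le_refl (0 : ℝ))
  have a4 := occAt_le_one η (le_refl (1 : ℝ)) (zero_le_one (α := ℝ))
  cases m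
  · exact ⟨by simp only [constr]; linarith [a2 (i.1 + 2)],
      by simp only [constr]; linarith [a1 (i.1 + 2)]⟩
  · exact ⟨by simp only [constr]; linarith [mul_le_one₀ (a2 i.1) (a1 (i.1 + 2)) (a2 (i.1 + 2))],
      by simp only [constr]; linarith [mul_nonneg (a1 i.1) (a1 (i.1 + 2))]⟩
  · exact ⟨by simp only [constr]; linarith [mul_le_one₀ (a4 i.1) (a3 (i.1 + 2)) (a4 (i.1 + 2))],
      by simp only [constr]; linarith [mul_nonneg (a3 i.1) (a3 (i.1 + 2))]⟩

lemma crate_nonneg {ρ : ℝ} (h0 : 0 < ρ) (h1 : ρ < 1) (m : KCM) {N : ℕ} (η : Config N)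
    (i : Fin N) : 0 ≤ crate m ρ η i :=
  mul_nonneg (constr_mem m η i).1 (by split_ifs <;> linarith)

lemma crate_le_one {ρ : ℝ} (h0 : 0 < ρ) (h1 : ρ < 1) (m : KCM) {N : ℕ} (η : Config N)
    (i : Fin N) : crate m ρ η i ≤ 1 :=
  mul_le_one₀ (constr_mem m η i).2 (by split_ifs <;> linarith) (by split_ifs <;> linarith)

lemma meanAct_pos {ρ : ℝ} (h0 : 0 < ρ) (h1 : ρ < 1) (m : KCM) : 0 < meanAct m ρ := by
  have : 0 < 1 - ρ := by linarith
  have : 0 < 1 - ρ ^ 2 := by nlinarith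
  cases m <;> simp only [meanAct] <;> positivity

lemma meanAct_le_one {ρ : ℝ} (h0 : 0 < ρ) (h1 : ρ < 1) (m : KCM) : meanAct m ρ ≤ 1 := by
  have h2 : 0 < 1 - ρ := by linarith
  have h3 : 2 * ρ * (1 - ρ) ≤ 1 := by nlinarith [sq_nonneg (ρ - 1 / 2)]
  have h4 : 0 < 2 * ρ * (1 - ρ) := by positivity
  have h5 : 0 ≤ 1 - ρ ^ 2 := by nlinarith
  cases m <;> simp only [meanAct] <;> nlinarith [mul_nonneg h4.le h0.le, mul_nonneg h4.le (sq_nonneg ρ)]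

/-- The rate at `i` depends only on the sites at distance at most one from `i`. -/
lemma crate_congr (m : KCM) (ρ : ℝ) {N : ℕ} {η η' : Config N} {i : Fin N}
    (h : ∀ x : Fin N, i.1 ≤ x.1 + 1 → x.1 ≤ i.1 + 1 → η x = η' x) :
    crate m ρ η i = crate m ρ η' i := by
  have key : ∀ (bl br : ℝ) (k : ℕ), i.1 ≤ k → k ≤ i.1 + 2 →
      occAt η bl br k = occAt η' bl br k := by
    intro bl br k hk1 hk2
    unfold occAt
    split_ifs with h1 h2 <;> first | rfl | skip
    all_goals simp_all [h ⟨k - 1, by omega⟩ (by simp; omega) (by simp; omega)]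
  unfold crate
  rw [h i (by omega) (by omega)]
  congr 1
  cases m <;> simp only [constr] <;> rw [key _ _ (i.1 + 2) (by omega) (by omega)]
  · rw [key _ _ i.1 (by omega) (by omega)]
  · rw [key _ _ i.1 (by omega) (by omega)]

/-- A site whose two neighbours are filled is frozen in every model. -/
lemma crate_eq_zero (m : KCM) (ρ : ℝ) {N : ℕ} {η : Config N} {a : ℕ} (ha : a + 2 < N)
    (hl : η ⟨a, by omega⟩ = true) (hr : η ⟨a + 2, ha⟩ = true) :
    crate m ρ η ⟨a + 1, by omega⟩ = 0 := by
  unfold crate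
  have e1 : ∀ bl br : ℝ, occAt η bl br (a + 1) = 1 := fun bl br => by
    rw [occAt_succ η bl br (by omega), hl]; simp
  have e2 : ∀ bl br : ℝ, occAt η bl br (a + 1 + 2) = 1 := fun bl br => by
    rw [occAt_succ η bl br (k := a + 2) ha, hr]; simp
  cases m <;> simp [constr, e1, e2]

/-- The three consecutive sites `a, a+1, a+2`. -/
def triple {N a : ℕ} (ha : a + 2 < N) (k : Fin 3) : Fin N := ⟨a + k.1, by omega⟩

lemma triple_injective {N a : ℕ} (ha : a + 2 < N) : Function.Injective (triple ha) := by
  intro x y h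
  simp only [triple, Fin.mk.injEq] at h
  exact Fin.ext (by omega)

/-- At a site that is not an endpoint, the mean rate over the site and its two neighbours is the
mean activity, whatever the rest of the configuration. -/
lemma expect_crate_triple (m : KCM) (ρ : ℝ) {N a : ℕ} (ha : a + 2 < N) (η : Config N) :
    expect ρ (fun ζ : Config 3 => crate m ρ (Function.extend (triple ha) ζ η) ⟨a + 1, by omega⟩)
      = meanAct m ρ := by
  have hv : ∀ (ζ : Config 3) (k : Fin 3),
      Function.extend (triple ha) ζ η (triple ha k) = ζ k := fun ζ k =>
    (triple_injective ha).extend_apply _ _ _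
  have hc : ∀ ζ : Config 3, crate m ρ (Function.extend (triple ha) ζ η) ⟨a + 1, by omega⟩ =
      (match m with
        | KCM.east => 1 - (if ζ 2 then 1 else 0)
        | _ => 1 - (if ζ 0 then 1 else 0) * (if ζ 2 then 1 else 0)) *
        (if ζ 1 then 1 - ρ else ρ) := by
    intro ζ
    have e0 : ∀ bl br : ℝ, occAt (Function.extend (triple ha) ζ η) bl br (a + 1) =
        if ζ 0 then 1 else 0 := fun bl br => by
      rw [occAt_succ _ bl br (by omega), ← hv ζ 0]; rfl
    have e2 : ∀ bl br : ℝ, occAt (Function.extend (triple ha) ζ η) bl br (a + 1 + 2) =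
        if ζ 2 then 1 else 0 := fun bl br => by
      rw [occAt_succ _ bl br (k := a + 2) ha, ← hv ζ 2]; rfl
    have e1 : Function.extend (triple ha) ζ η ⟨a + 1, by omega⟩ = ζ 1 := hv ζ 1
    unfold crate
    rw [e1]
    cases m <;> simp only [constr, e0, e2]
  simp only [hc]
  have hs : ∀ F : Config 3 → ℝ, ∑ ζ, F ζ = ∑ x : Bool, ∑ y : Bool, ∑ z : Bool, F ![x, y, z] := by
    intro F
    rw [← (Fin.consEquiv (fun _ : Fin 3 => Bool)).sum_comp, Fintype.sum_prod_type]
    refine Finset.sum_congr rfl fun x _ => ?_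
    rw [← (Fin.consEquiv (fun _ : Fin 2 => Bool)).sum_comp, Fintype.sum_prod_type]
    refine Finset.sum_congr rfl fun y _ => ?_
    rw [← (Fin.consEquiv (fun _ : Fin 1 => Bool)).sum_comp, Fintype.sum_prod_type]
    refine Finset.sum_congr rfl fun z _ => ?_
    rw [Fintype.sum_unique]
    rfl
  unfold _root_.expect
  rw [hs]
  cases m <;> simp [bern, Fin.prod_univ_three, meanAct] <;> ring

/-- The interval of sites `s, …, s+j-1` inside `Fin N`. -/
def seg {N s j : ℕ} (h : s + j ≤ N) (k : Fin j) : Fin N := ⟨s + k.1, by omega⟩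

lemma seg_injective {N s j : ℕ} (h : s + j ≤ N) : Function.Injective (seg h) := by
  intro x y hxy
  simp only [seg, Fin.mk.injEq] at hxy
  exact Fin.ext (by omega)

lemma extend_flip {N j : ℕ} {e : Fin j → Fin N} (he : Function.Injective e) (ζ : Config j)
    (η : Config N) (k : Fin j) :
    Function.extend e (flipAt ζ k) η = flipAt (Function.extend e ζ η) (e k) := by
  ext i
  by_cases hi : ∃ l, e l = i
  · obtain ⟨l, rfl⟩ := hi
    by_cases hl : l = k
    · subst hl; simp [flipAt, he.extend_apply]
    · have : e l ≠ e k := fun h => hl (he h)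
      simp [flipAt, he.extend_apply, hl, this]
  · have : i ≠ e k := fun h => hi ⟨k, h.symm⟩
    simp [flipAt, Function.extend_apply' _ _ _ hi, this]

/-- With an empty site just to the right of a segment, the rates of the dynamics on the segment
with empty right boundary are dominated by the true rates. -/
lemma crate_gapModel_le {ρ : ℝ} (h0 : 0 < ρ) (h1 : ρ < 1) (m : KCM) {N s j : ℕ}
    (h : s + j < N) (η : Config N) (hz : η ⟨s + j, h⟩ = false) (ζ : Config j) (k : Fin j) :
    crate (gapModel m) ρ ζ k ≤ crate m ρ (Function.extend (seg h.le) ζ η) (seg h.le k) := by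
  set σ := Function.extend (seg h.le) ζ η with hσ
  have hv : ∀ l : Fin j, σ (seg h.le l) = ζ l := fun l => (seg_injective h.le).extend_apply _ _ _
  have hr : ∀ bl bl' : ℝ, occAt σ bl 0 ((seg h.le k).1 + 2) = occAt ζ bl' 0 (k.1 + 2) := by
    intro bl bl'
    have e1 : (seg h.le k).1 + 2 = (s + k.1 + 1) + 1 := rfl
    rw [e1, occAt_succ σ bl 0 (k := s + k.1 + 1) (by omega)]
    by_cases hk : k.1 + 1 < j
    · rw [occAt_succ ζ bl' 0 (k := k.1 + 1) hk, ← hv ⟨k.1 + 1, hk⟩]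
      rfl
    · rw [occAt_right ζ bl' 0 (by omega)]
      have hnot : ¬ ∃ l, seg h.le l = (⟨s + j, h⟩ : Fin N) := by
        rintro ⟨l, hl⟩
        simp only [seg, Fin.mk.injEq] at hl
        omega
      have e2 : (⟨s + k.1 + 1, by omega⟩ : Fin N) = ⟨s + j, h⟩ := Fin.ext (by simp; omega)
      rw [e2, hσ, Function.extend_apply' _ _ _ hnot, hz]
      simp
  have hl : ∀ bl : ℝ, 0 ≤ bl → bl ≤ 1 → occAt σ bl 0 (seg h.le k).1 ≤ occAt ζ 1 0 k.1 := by
    intro bl hb0 hb1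
    by_cases hk : k.1 = 0
    · have : occAt ζ 1 0 k.1 = 1 := by simp [occAt, hk]
      rw [this]
      exact occAt_le_one σ hb1 zero_le_one _
    · obtain ⟨p, hp⟩ := Nat.exists_eq_succ_of_ne_zero hk
      have e1 : (seg h.le k).1 = (s + p) + 1 := by simp [seg, hp]; omega
      rw [e1, hp, occAt_succ σ bl 0 (by omega), Nat.succ_eq_add_one,
        occAt_succ ζ 1 0 (by omega), ← hv ⟨p, by omega⟩]
      rfl
  unfold crate
  rw [hv k]
  refine mul_le_mul_of_nonneg_right ?_ (by split_ifs <;> linarith)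
  have hn := occAt_nonneg ζ (zero_le_one (α := ℝ)) (le_refl (0 : ℝ)) (k.1 + 2)
  cases m
  · simp only [gapModel, constr]
    rw [hr 0 0]
  · simp only [gapModel, constr]
    rw [hr 0 1]
    linarith [mul_le_mul_of_nonneg_right (hl 0 le_rfl zero_le_one) hn]
  · simp only [gapModel, constr]
    rw [hr 1 1]
    linarith [mul_le_mul_of_nonneg_right (hl 1 zero_le_one le_rfl) hn]

/-- The mean rate at an inner site of a segment, averaged over the segment only. -/
lemma expect_crate_seg (m : KCM) (ρ : ℝ) {N s j : ℕ} (h : s + j ≤ N) (η : Config N) (i : Fin N)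
    (hi : s < i.1) (hi' : i.1 + 1 < s + j) :
    expect ρ (fun ζ : Config j => crate m ρ (Function.extend (seg h) ζ η) i) = meanAct m ρ := by
  have hb : (i.1 - 1 - s) + 2 < j := by omega
  have hN : (i.1 - 1) + 2 < N := by omega
  rw [expect_extend ρ (triple_injective hb)]
  have key : ∀ (ζ : Config j) (ξ : Config 3),
      Function.extend (seg h) (Function.extend (triple hb) ξ ζ) η =
        Function.extend (triple hN) ξ (Function.extend (seg h) ζ η) := by
    intro ζ ξ
    have hc : ∀ k, seg h (triple hb k) = triple hN k := fun k => by
      simp only [seg, triple, Fin.mk.injEq]; omega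
    ext x
    by_cases hx : ∃ k, triple hN k = x
    · obtain ⟨k, rfl⟩ := hx
      rw [(triple_injective hN).extend_apply, ← hc, (seg_injective h).extend_apply,
        (triple_injective hb).extend_apply]
    · rw [Function.extend_apply' _ _ _ hx]
      by_cases hx' : ∃ k, seg h k = x
      · obtain ⟨k, rfl⟩ := hx'
        rw [(seg_injective h).extend_apply, (seg_injective h).extend_apply,
          Function.extend_apply']
        rintro ⟨l, rfl⟩
        exact hx ⟨l, (hc l).symm⟩
      · rw [Function.extend_apply' _ _ _ hx', Function.extend_apply' _ _ _ hx']
  have hi2 : i = ⟨(i.1 - 1) + 1, by omega⟩ := Fin.ext (by simp; omega)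
  have : ∀ ζ : Config j, expect ρ (fun ξ : Config 3 =>
      crate m ρ (Function.extend (seg h) (Function.extend (triple hb) ξ ζ) η) i) =
        meanAct m ρ := by
    intro ζ
    simp only [key]
    have h3 := expect_crate_triple m ρ hN (Function.extend (seg h) ζ η)
    rwa [← hi2] at h3
  simp only [this]
  exact nu_const ρ j _

/-! ### The activity of a block -/

/-- The sites `s, …, s+K-1`. -/
def blk (N s K : ℕ) : Finset (Fin N) :=
  Finset.univ.filter fun x => s ≤ x.1 ∧ x.1 < s + K

lemma card_blk_le (N s K : ℕ) : ((blk N s K).card : ℝ) ≤ K := by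
  have : (blk N s K).card ≤ (Finset.Ico s (s + K)).card := by
    refine Finset.card_le_card_of_injOn (fun x => x.1) ?_ (fun a _ b _ h => Fin.ext h)
    intro x hx
    simpa [blk] using hx
  simp at this
  exact_mod_cast this

/-- The centred activity of the sites `s, …, s+K-1`. -/
noncomputable def cact (m : KCM) (ρ : ℝ) {N : ℕ} (s K : ℕ) (η : Config N) : ℝ :=
  ∑ i ∈ blk N s K, (crate m ρ η i - meanAct m ρ)

/-- The contribution of the flip at `i` to the Dirichlet form, before averaging. -/
noncomputable def grad (m : KCM) (ρ : ℝ) {N : ℕ} (g : Config N → ℝ) (i : Fin N)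
    (η : Config N) : ℝ :=
  crate m ρ η i * (g (flipAt η i) - g η) ^ 2

lemma grad_nonneg {ρ : ℝ} (h0 : 0 < ρ) (h1 : ρ < 1) (m : KCM) {N : ℕ} (g : Config N → ℝ)
    (i : Fin N) (η : Config N) : 0 ≤ grad m ρ g i η :=
  mul_nonneg (crate_nonneg h0 h1 m η i) (sq_nonneg _)

lemma abs_cact_le {ρ : ℝ} (h0 : 0 < ρ) (h1 : ρ < 1) (m : KCM) {N : ℕ} (s K : ℕ)
    (η : Config N) : |cact m ρ s K η| ≤ K := by
  refine (Finset.abs_sum_le_sum_abs _ _).trans ?_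
  refine le_trans (Finset.sum_le_card_nsmul _ _ 1 fun i _ => ?_) ?_
  · rw [abs_le]
    constructor <;> linarith [crate_nonneg h0 h1 m η i, crate_le_one h0 h1 m η i,
      meanAct_pos h0 h1 m, meanAct_le_one h0 h1 m]
  · simpa using card_blk_le N s K

lemma sum_indicator_le {N : ℕ} (B : Finset (Fin N)) (T : Finset ℕ) :
    ∑ i ∈ B, (if i.1 ∈ T then (1 : ℝ) else 0) ≤ T.card := by
  rw [Finset.sum_boole]
  have : (B.filter fun i => i.1 ∈ T).card ≤ T.card :=
    Finset.card_le_card_of_injOn (fun x => x.1) (fun x hx => (Finset.mem_filter.1 hx).2)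
      (fun a _ b _ h => Fin.ext h)
  exact_mod_cast this

/-- All sites of `[z, t)` are filled. -/
def Filled {N : ℕ} (z t : ℕ) (η : Config N) : Prop :=
  ∀ i : Fin N, z ≤ i.1 → i.1 < t → η i = true

lemma crate_eq_zero_of_filled (m : KCM) (ρ : ℝ) {N : ℕ} {η : Config N} {z t : ℕ} (ht : t ≤ N)
    (h : Filled z t η) (i : Fin N) (h1 : z < i.1) (h2 : i.1 + 1 < t) : crate m ρ η i = 0 := by
  have ha : (i.1 - 1) + 2 < N := by omega
  have hi : i = ⟨(i.1 - 1) + 1, by omega⟩ := Fin.ext (by simp; omega)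
  rw [hi]
  exact crate_eq_zero m ρ ha (h _ (by simp; omega) (by simp; omega))
    (h _ (by simp; omega) (by simp; omega))

lemma cact_le_of_filled {ρ : ℝ} (h0 : 0 < ρ) (h1 : ρ < 1) (m : KCM) {N s K : ℕ}
    (hN : s + K ≤ N) (η : Config N) (h : Filled s (s + K) η) : cact m ρ s K η ≤ 2 := by
  have hb : cact m ρ s K η ≤
      ∑ i ∈ blk N s K, (if i.1 ∈ ({s, s + K - 1} : Finset ℕ) then (1 : ℝ) else 0) := by
    refine Finset.sum_le_sum fun i hi => ?_
    have hi' := (Finset.mem_filter.1 hi).2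
    split_ifs with hT
    · linarith [crate_le_one h0 h1 m η i, meanAct_pos h0 h1 m]
    · simp only [Finset.mem_insert, Finset.mem_singleton, not_or] at hT
      rw [crate_eq_zero_of_filled m ρ hN h i (by omega) (by omega)]
      linarith [meanAct_pos h0 h1 m]
  refine (hb.trans (sum_indicator_le _ _)).trans ?_
  exact_mod_cast (Finset.card_insert_le _ _).trans (by simp)

/-- If the sites of the block to the right of `s+j` are filled, the centred activity of the block
has a bounded mean over the sites to the left of `s+j`: there every site but the extreme ones has
mean rate equal to the mean activity, and on the right only the extreme sites can move. -/
lemma expect_cact_le {ρ : ℝ} (h0 : 0 < ρ) (h1 : ρ < 1) (m : KCM) {N s K j : ℕ}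
    (hN : s + K ≤ N) (hj : j < K) (η : Config N) (hf : Filled (s + j + 1) (s + K) η) :
    expect ρ (fun ζ : Config j =>
      cact m ρ s K (Function.extend (seg (show s + j ≤ N by omega)) ζ η)) ≤ 5 := by
  have hjN : s + j ≤ N := by omega
  unfold cact
  rw [nu_sum]
  have hb : ∀ i ∈ blk N s K, expect ρ (fun ζ : Config j =>
      crate m ρ (Function.extend (seg hjN) ζ η) i - meanAct m ρ) ≤
      if i.1 ∈ ({s, s + j - 1, s + j, s + j + 1, s + K - 1} : Finset ℕ) then (1 : ℝ) else 0 := by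
    intro i hi
    have hi' := (Finset.mem_filter.1 hi).2
    split_ifs with hT
    · rw [← nu_const ρ j 1]
      refine nu_mono h0 h1 fun ζ => ?_
      linarith [crate_le_one h0 h1 m (Function.extend (seg hjN) ζ η) i, meanAct_pos h0 h1 m]
    · simp only [Finset.mem_insert, Finset.mem_singleton, not_or] at hT
      rcases lt_or_ge i.1 (s + j) with hlt | hge
      · have := expect_crate_seg m ρ hjN η i (by omega) (by omega)
        simp only [sub_eq_add_neg]
        rw [nu_add, this, nu_const]
        linarith
      · have hz : ∀ ζ : Config j, crate m ρ (Function.extend (seg hjN) ζ η) i = 0 := by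
          intro ζ
          refine crate_eq_zero_of_filled m ρ hN (z := s + j + 1) ?_ i (by omega) (by omega)
          intro x hx hx'
          rw [Function.extend_apply']
          · exact hf x hx hx'
          · rintro ⟨l, rfl⟩
            simp only [seg] at hx
            omega
        simp only [hz]
        rw [nu_const]
        linarith [meanAct_pos h0 h1 m]
  refine (Finset.sum_le_sum hb).trans ((sum_indicator_le _ _).trans ?_)
  have : ({s, s + j - 1, s + j, s + j + 1, s + K - 1} : Finset ℕ).card ≤ 5 := Finset.card_le_five
  exact_mod_cast this

/-- A bounded observable whose mean is at most `5`, weighted by `g²`: the excess over the constant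
is controlled by the variance of `g`. -/
lemma expect_sq_mul_le {ρ : ℝ} (h0 : 0 < ρ) (h1 : ρ < 1) {j : ℕ} (K : ℝ)
    (g Y : Config j → ℝ) (hY : ∀ ζ, |Y ζ| ≤ K) (hE : expect ρ Y ≤ 5) :
    expect ρ (fun ζ => g ζ ^ 2 * Y ζ) ≤ 6 * expect ρ (fun ζ => g ζ ^ 2) +
      (K ^ 2 + K) * (expect ρ (fun ζ => g ζ ^ 2) - expect ρ g ^ 2) := by
  set q := expect ρ g with hq
  have hvar : expect ρ (fun ζ => (g ζ - q) ^ 2) = expect ρ (fun ζ => g ζ ^ 2) - q ^ 2 := by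
    have : (fun ζ => (g ζ - q) ^ 2) = fun ζ => g ζ ^ 2 + ((-2 * q) * g ζ + q ^ 2) := by
      ext ζ; ring
    rw [this, nu_add, nu_add, nu_const_mul, nu_const, ← hq]
    ring
  have hv0 : 0 ≤ expect ρ (fun ζ => (g ζ - q) ^ 2) := nu_nonneg h0 h1 fun _ => sq_nonneg _
  have hb : expect ρ (fun ζ => g ζ ^ 2 * Y ζ) ≤
      expect ρ (fun ζ => q ^ 2 * Y ζ + (q ^ 2 + (K ^ 2 + K) * (g ζ - q) ^ 2)) := by
    refine nu_mono h0 h1 fun ζ => ?_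
    have hYl := abs_le.1 (hY ζ)
    have hY2 : Y ζ ^ 2 ≤ K ^ 2 := sq_le_sq' hYl.1 hYl.2
    have a1 : (g ζ - q) ^ 2 * Y ζ ≤ (g ζ - q) ^ 2 * K :=
      mul_le_mul_of_nonneg_left hYl.2 (sq_nonneg _)
    have a2 : (g ζ - q) ^ 2 * Y ζ ^ 2 ≤ (g ζ - q) ^ 2 * K ^ 2 :=
      mul_le_mul_of_nonneg_left hY2 (sq_nonneg _)
    nlinarith [sq_nonneg (q - (g ζ - q) * Y ζ)]
  rw [nu_add, nu_add, nu_const_mul, nu_const_mul, nu_const, hvar] at hb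
  have : q ^ 2 * expect ρ Y ≤ q ^ 2 * 5 := mul_le_mul_of_nonneg_left hE (sq_nonneg _)
  rw [hvar] at hv0
  linarith

/-- Bound on the event that `s+j` is the rightmost empty site of the block `[s, s+K)`: given the
configuration outside `[s, s+j)`, the dynamics inside `[s, s+j)` has an empty right boundary and so
satisfies the spectral gap inequality. -/
lemma expect_rightmost_le {ρ : ℝ} (h0 : 0 < ρ) (h1 : ρ < 1) (m : KCM) {S : ℝ} (hS : 0 < S)
    (hgap : ∀ (M : ℕ) (g : Config M → ℝ),
      S * (expect ρ (fun σ => g σ ^ 2) - (expect ρ g) ^ 2) ≤ dirichlet (gapModel m) ρ g)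
    {N s K j : ℕ} (hN : s + K ≤ N) (hj : j < K) (g : Config N → ℝ)
    (A : Config N → Prop) [DecidablePred A] (hA : ∀ η, A η ↔
      η ⟨s + j, by omega⟩ = false ∧ Filled (s + j + 1) (s + K) η) :
    expect ρ (fun η => (if A η then 1 else 0) * (g η ^ 2 * cact m ρ s K η)) ≤
      expect ρ (fun η => (if A η then 1 else 0) * (6 * g η ^ 2 +
        ((K : ℝ) ^ 2 + K) / S * ∑ i ∈ blk N s K, grad m ρ g i η)) := by
  have hjN : s + j ≤ N := by omega
  rw [expect_extend ρ (seg_injective hjN), expect_extend ρ (seg_injective hjN)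
    (fun η => (if A η then 1 else 0) * (6 * g η ^ 2 + _))]
  refine nu_mono h0 h1 fun η => ?_
  have hout : ∀ (ζ : Config j) (x : Fin N), s + j ≤ x.1 →
      Function.extend (seg hjN) ζ η x = η x := by
    intro ζ x hx
    rw [Function.extend_apply']
    rintro ⟨l, rfl⟩
    simp only [seg] at hx
    omega
  have hAe : ∀ ζ : Config j, A (Function.extend (seg hjN) ζ η) ↔ A η := by
    intro ζ
    rw [hA, hA, hout _ _ (by simp)]
    refine and_congr_right fun _ => forall_congr' fun x => ?_
    constructor <;> intro hx h1 h2
    · rw [← hout ζ x (by omega)]; exact hx h1 h2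
    · rw [hout ζ x (by omega)]; exact hx h1 h2
  simp only [hAe]
  by_cases hAη : A η
  swap
  · simp [hAη]
  simp only [if_pos hAη, one_mul]
  obtain ⟨hz, hf⟩ := (hA η).1 hAη
  have hE := expect_cact_le h0 h1 m hN hj η hf
  have hmain := expect_sq_mul_le h0 h1 (K : ℝ)
    (fun ζ : Config j => g (Function.extend (seg hjN) ζ η))
    (fun ζ => cact m ρ s K (Function.extend (seg hjN) ζ η))
    (fun ζ => abs_cact_le h0 h1 m s K _) hE
  have hg := hgap j (fun ζ : Config j => g (Function.extend (seg hjN) ζ η))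
  have hd : dirichlet (gapModel m) ρ (fun ζ : Config j => g (Function.extend (seg hjN) ζ η)) ≤
      expect ρ (fun ζ : Config j =>
        ∑ i ∈ blk N s K, grad m ρ g i (Function.extend (seg hjN) ζ η)) := by
    unfold dirichlet
    rw [← nu_sum]
    refine nu_mono h0 h1 fun ζ => ?_
    calc _ ≤ ∑ k : Fin j, grad m ρ g (seg hjN k) (Function.extend (seg hjN) ζ η) := by
          refine Finset.sum_le_sum fun k _ => ?_
          unfold grad
          beta_reduce
          rw [extend_flip (seg_injective hjN)]
          exact mul_le_mul_of_nonneg_right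
            (crate_gapModel_le h0 h1 m (by omega) η hz ζ k) (sq_nonneg _)
      _ = ∑ i ∈ Finset.univ.image (seg hjN),
            grad m ρ g i (Function.extend (seg hjN) ζ η) := by
          rw [Finset.sum_image (fun a _ b _ h => seg_injective hjN h)]
      _ ≤ _ := by
          refine Finset.sum_le_sum_of_subset_of_nonneg ?_ fun i _ _ => grad_nonneg h0 h1 m g i _
          intro x hx
          obtain ⟨k, -, rfl⟩ := Finset.mem_image.1 hx
          have := k.2
          simp only [blk, seg, Finset.mem_filter, Finset.mem_univ, true_and]
          omega
  rw [nu_add, nu_const_mul, nu_const_mul]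
  refine hmain.trans ?_
  have hK : 0 ≤ ((K : ℝ) ^ 2 + K) / S := by positivity
  have := mul_le_mul_of_nonneg_left (hg.trans hd) hK
  have e : ((K : ℝ) ^ 2 + K) / S * (S * (expect ρ (fun ζ : Config j =>
      g (Function.extend (seg hjN) ζ η) ^ 2) - (expect ρ fun ζ : Config j =>
      g (Function.extend (seg hjN) ζ η)) ^ 2)) = ((K : ℝ) ^ 2 + K) * (expect ρ (fun ζ : Config j =>
      g (Function.extend (seg hjN) ζ η) ^ 2) - (expect ρ fun ζ : Config j =>
      g (Function.extend (seg hjN) ζ η)) ^ 2) := by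
    field_simp
  rw [e] at this
  linarith

/-- Under the law `g² ν` the activity of a block exceeds its equilibrium value by at most a constant
independent of the block length, up to a multiple of the Dirichlet form of the block. -/
lemma expect_block_le {ρ : ℝ} (h0 : 0 < ρ) (h1 : ρ < 1) (m : KCM) {S : ℝ} (hS : 0 < S)
    (hgap : ∀ (M : ℕ) (g : Config M → ℝ),
      S * (expect ρ (fun σ => g σ ^ 2) - (expect ρ g) ^ 2) ≤ dirichlet (gapModel m) ρ g)
    {N s K : ℕ} (hN : s + K ≤ N) (g : Config N → ℝ) :
    expect ρ (fun η => g η ^ 2 * cact m ρ s K η) ≤ 6 * expect ρ (fun η => g η ^ 2) +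
      ((K : ℝ) ^ 2 + K) / S * ∑ i ∈ blk N s K, expect ρ (grad m ρ g i) := by
  have hK : 0 ≤ ((K : ℝ) ^ 2 + K) / S := by positivity
  -- `B j`: the indicator that `s+j, …, s+K-1` are filled; `A j`: `s+j` is the rightmost empty site.
  set B : ℕ → Config N → ℝ := fun j η => if Filled (s + j) (s + K) η then 1 else 0 with hB
  set A : ℕ → Config N → Prop := fun j η =>
    Filled (s + (j + 1)) (s + K) η ∧ ¬ Filled (s + j) (s + K) η with hAdef
  have hBK : ∀ η, B K η = 1 := fun η => if_pos fun i h h' => by omega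
  have hBA : ∀ j η, (if A j η then (1 : ℝ) else 0) = B (j + 1) η - B j η := by
    intro j η
    by_cases h2 : Filled (s + j) (s + K) η
    · have h3 : Filled (s + (j + 1)) (s + K) η := fun i a b => h2 i (by omega) b
      simp [hAdef, hB, h2, h3]
    · simp [hAdef, hB, h2]
  have hpart : ∀ η, 1 = B 0 η + ∑ j ∈ Finset.range K, (if A j η then (1 : ℝ) else 0) := by
    intro η
    simp only [hBA]
    rw [Finset.sum_range_sub (fun j => B j η), hBK]
    ring
  have hA : ∀ j (hj : j < K) η, A j η ↔
      η ⟨s + j, by omega⟩ = false ∧ Filled (s + j + 1) (s + K) η := by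
    intro j hj η
    constructor
    · rintro ⟨a, b⟩
      refine ⟨?_, a⟩
      by_contra hc
      refine b fun i hi hi' => ?_
      rcases hi.eq_or_lt with h | h
      · have : i = ⟨s + j, by omega⟩ := Fin.ext h.symm
        rw [this]
        simpa using hc
      · exact a i (by omega) hi'
    · rintro ⟨a, b⟩
      refine ⟨b, fun hc => ?_⟩
      have := hc ⟨s + j, by omega⟩ le_rfl (by simp; omega)
      rw [a] at this
      exact Bool.false_ne_true this
  set R : Config N → ℝ := fun η => 6 * g η ^ 2 +
        ((K : ℝ) ^ 2 + K) / S * ∑ i ∈ blk N s K, grad m ρ g i η with hR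
  have hG : ∀ η, 0 ≤ ∑ i ∈ blk N s K, grad m ρ g i η := fun η =>
    Finset.sum_nonneg fun i _ => grad_nonneg h0 h1 m g i η
  have step0 : expect ρ (fun η => B 0 η * (g η ^ 2 * cact m ρ s K η)) ≤
      expect ρ (fun η => B 0 η * R η) := by
    refine nu_mono h0 h1 fun η => ?_
    by_cases hf : Filled (s + 0) (s + K) η
    · have := cact_le_of_filled h0 h1 m hN η hf
      have h2 := mul_le_mul_of_nonneg_left this (sq_nonneg (g η))
      have h3 := mul_nonneg hK (hG η)
      simp only [hB, if_pos hf, one_mul, hR]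
      nlinarith [sq_nonneg (g η)]
    · simp only [hB, if_neg hf, zero_mul, le_refl]
  have hsplit : ∀ F : Config N → ℝ, expect ρ F = expect ρ (fun η => B 0 η * F η) +
      ∑ j ∈ Finset.range K, expect ρ (fun η => (if A j η then 1 else 0) * F η) := by
    intro F
    rw [← nu_sum, ← nu_add]
    congr 1
    ext η
    rw [← Finset.sum_mul, ← add_mul, ← hpart, one_mul]
  have hfin : expect ρ R = 6 * expect ρ (fun η => g η ^ 2) +
      ((K : ℝ) ^ 2 + K) / S * ∑ i ∈ blk N s K, expect ρ (grad m ρ g i) := by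
    rw [hR, nu_add, nu_const_mul, nu_const_mul, ← nu_sum]
  rw [← hfin, hsplit, hsplit R]
  refine add_le_add step0 (Finset.sum_le_sum fun j hj => ?_)
  exact expect_rightmost_le h0 h1 m hS hgap hN (Finset.mem_range.1 hj) g (A j)
    (hA j (Finset.mem_range.1 hj))

/-! ### The total activity -/

/-- The centred total activity `𝓗 − 𝔸N`. -/
noncomputable def tact (m : KCM) (ρ : ℝ) {N : ℕ} (η : Config N) : ℝ :=
  ∑ i, (crate m ρ η i - meanAct m ρ)

lemma escRate_eq (m : KCM) (ρ : ℝ) {N : ℕ} (η : Config N) :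
    escRate m ρ η = meanAct m ρ * N + tact m ρ η := by
  unfold tact escRate
  rw [Finset.sum_sub_distrib]
  simp
  ring

/-- The intervals `[bK, (b+1)K) ∩ [0, N)` partition `Fin N`. -/
lemma sum_eq_sum_blk {N K : ℕ} (hK : 0 < K) (F : Fin N → ℝ) :
    ∑ i, F i = ∑ b ∈ Finset.range (N / K + 1), ∑ i ∈ blk N (b * K) (min K (N - b * K)), F i := by
  rw [← Finset.sum_fiberwise_of_maps_to (s := Finset.univ) (t := Finset.range (N / K + 1))
    (g := fun i : Fin N => i.1 / K)]
  · refine Finset.sum_congr rfl fun b _ => Finset.sum_congr ?_ fun _ _ => rfl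
    ext i
    have hi := i.2
    simp only [blk, Finset.mem_filter, Finset.mem_univ, true_and]
    rw [Nat.div_eq_iff hK]
    constructor
    · rintro ⟨a, b⟩; omega
    · rintro ⟨a, b⟩; omega
  · intro i _
    rw [Finset.mem_range, Nat.lt_succ_iff]
    exact Nat.div_le_div_right i.2.le

/-- Under `g² ν` the activity exceeds `𝔸N` by at most a constant per block of length `K`, up to a
multiple of the Dirichlet form of `g`. -/
lemma expect_tact_le {ρ : ℝ} (h0 : 0 < ρ) (h1 : ρ < 1) (m : KCM) {S : ℝ} (hS : 0 < S)
    (hgap : ∀ (M : ℕ) (g : Config M → ℝ),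
      S * (expect ρ (fun σ => g σ ^ 2) - (expect ρ g) ^ 2) ≤ dirichlet (gapModel m) ρ g)
    {N K : ℕ} (hK : 0 < K) (g : Config N → ℝ) (hg : expect ρ (fun η => g η ^ 2) = 1) :
    expect ρ (fun η => g η ^ 2 * tact m ρ η) ≤ 6 * ((N : ℝ) / K + 1) +
      ((K : ℝ) ^ 2 + K) / S * dirichlet m ρ g := by
  have e1 : expect ρ (fun η => g η ^ 2 * tact m ρ η) = ∑ b ∈ Finset.range (N / K + 1),
      expect ρ (fun η => g η ^ 2 * cact m ρ (b * K) (min K (N - b * K)) η) := by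
    rw [← nu_sum]
    congr 1
    ext η
    unfold tact cact
    rw [sum_eq_sum_blk hK, Finset.mul_sum]
  have e2 : dirichlet m ρ g = ∑ b ∈ Finset.range (N / K + 1),
      ∑ i ∈ blk N (b * K) (min K (N - b * K)), expect ρ (grad m ρ g i) :=
    sum_eq_sum_blk hK (fun i => expect ρ (grad m ρ g i))
  have hb : ∀ b ∈ Finset.range (N / K + 1),
      expect ρ (fun η => g η ^ 2 * cact m ρ (b * K) (min K (N - b * K)) η) ≤ 6 +
        ((K : ℝ) ^ 2 + K) / S *
          ∑ i ∈ blk N (b * K) (min K (N - b * K)), expect ρ (grad m ρ g i) := by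
    intro b hb
    have hbN : b * K ≤ N :=
      (Nat.mul_le_mul_right K (Nat.lt_succ_iff.1 (Finset.mem_range.1 hb))).trans
        (Nat.div_mul_le_self N K)
    have h := expect_block_le h0 h1 m hS hgap (s := b * K) (K := min K (N - b * K)) (by omega) g
    rw [hg, mul_one] at h
    refine h.trans (add_le_add_right (mul_le_mul_of_nonneg_right ?_ ?_) _)
    · have : ((min K (N - b * K) : ℕ) : ℝ) ≤ K := by exact_mod_cast min_le_left _ _
      gcongr
    · exact Finset.sum_nonneg fun i _ => nu_nonneg h0 h1 fun η => grad_nonneg h0 h1 m g i η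
  rw [e1, e2]
  refine (Finset.sum_le_sum hb).trans ?_
  rw [Finset.sum_add_distrib, ← Finset.mul_sum]
  have : ((N / K : ℕ) : ℝ) ≤ (N : ℝ) / K := Nat.cast_div_le
  refine add_le_add_left ?_ _
  simp
  linarith

lemma expect_crate_corr {ρ : ℝ} (m : KCM) {N : ℕ} (i k : Fin N)
    (hi : 0 < i.1) (hi' : i.1 + 1 < N) (hk : i.1 + 2 < k.1 ∨ k.1 + 2 < i.1) :
    expect ρ (fun η : Config N => (crate m ρ η i - meanAct m ρ) *
      (crate m ρ η k - meanAct m ρ)) = 0 := by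
  have hN : (i.1 - 1) + 2 < N := by omega
  have hi2 : (⟨(i.1 - 1) + 1, by omega⟩ : Fin N) = i := Fin.ext (by simp; omega)
  rw [expect_extend ρ (triple_injective hN), ← nu_const ρ N 0]
  congr 1
  ext η
  have hck : ∀ ζ : Config 3, crate m ρ (Function.extend (triple hN) ζ η) k = crate m ρ η k := by
    intro ζ
    refine crate_congr m ρ fun x hx hx' => ?_
    rw [Function.extend_apply']
    rintro ⟨l, rfl⟩
    have := l.2
    simp only [triple] at hx hx'
    omega
  have hci := expect_crate_triple m ρ hN η
  rw [hi2] at hci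
  simp only [hck]
  have : (fun ζ : Config 3 => (crate m ρ (Function.extend (triple hN) ζ η) i - meanAct m ρ) *
      (crate m ρ η k - meanAct m ρ)) = fun ζ => (crate m ρ η k - meanAct m ρ) *
        (crate m ρ (Function.extend (triple hN) ζ η) i + - meanAct m ρ) := by
    ext ζ; ring
  rw [this, nu_const_mul, nu_add, hci, nu_const]
  ring

/-- The variance of the activity grows at most linearly, since rates at distance at least three
are uncorrelated. -/
lemma expect_tact_sq_le {ρ : ℝ} (h0 : 0 < ρ) (h1 : ρ < 1) (m : KCM) (N : ℕ) :
    expect ρ (fun η : Config N => tact m ρ η ^ 2) ≤ 7 * N := by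
  have e : (fun η : Config N => tact m ρ η ^ 2) = fun η => ∑ i : Fin N, ∑ k : Fin N,
      (crate m ρ η i - meanAct m ρ) * (crate m ρ η k - meanAct m ρ) := by
    ext η
    rw [sq, tact, Finset.sum_mul_sum]
  rw [e, nu_sum]
  simp only [nu_sum]
  have hb : ∀ i k : Fin N, expect ρ (fun η : Config N => (crate m ρ η i - meanAct m ρ) *
      (crate m ρ η k - meanAct m ρ)) ≤
      (if k.1 ∈ ({i.1 - 2, i.1 - 1, i.1, i.1 + 1, i.1 + 2} : Finset ℕ) then (1 : ℝ) else 0) +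
      (if i.1 ∈ ({0, N - 1} : Finset ℕ) then (1 : ℝ) else 0) := by
    intro i k
    have hle : expect ρ (fun η : Config N => (crate m ρ η i - meanAct m ρ) *
        (crate m ρ η k - meanAct m ρ)) ≤ 1 := by
      rw [← nu_const ρ N 1]
      refine nu_mono h0 h1 fun η => (abs_le.1 ?_).2
      rw [abs_mul]
      have hx : ∀ i : Fin N, |crate m ρ η i - meanAct m ρ| ≤ 1 := fun i => by
        rw [abs_le]
        constructor <;> linarith [crate_nonneg h0 h1 m η i, crate_le_one h0 h1 m η i,
          meanAct_pos h0 h1 m, meanAct_le_one h0 h1 m]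
      exact mul_le_one₀ (hx i) (abs_nonneg _) (hx k)
    by_cases c1 : k.1 ∈ ({i.1 - 2, i.1 - 1, i.1, i.1 + 1, i.1 + 2} : Finset ℕ)
    · rw [if_pos c1]
      refine hle.trans (le_add_of_nonneg_right ?_)
      split_ifs <;> norm_num
    · by_cases c2 : i.1 ∈ ({0, N - 1} : Finset ℕ)
      · rw [if_neg c1, if_pos c2, zero_add]
        exact hle
      · rw [if_neg c1, if_neg c2]
        simp only [Finset.mem_insert, Finset.mem_singleton, not_or] at c1 c2
        rw [expect_crate_corr m i k (by omega) (by omega) (by omega)]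
        simp
  refine (Finset.sum_le_sum fun i _ => Finset.sum_le_sum fun k _ => hb i k).trans ?_
  simp only [Finset.sum_add_distrib]
  have s1 : ∑ i : Fin N, ∑ k : Fin N,
      (if k.1 ∈ ({i.1 - 2, i.1 - 1, i.1, i.1 + 1, i.1 + 2} : Finset ℕ) then (1 : ℝ) else 0) ≤
      ∑ i : Fin N, (5 : ℝ) := by
    refine Finset.sum_le_sum fun i _ => (sum_indicator_le _ _).trans ?_
    have : ({i.1 - 2, i.1 - 1, i.1, i.1 + 1, i.1 + 2} : Finset ℕ).card ≤ 5 := Finset.card_le_five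
    exact_mod_cast this
  have s2 : ∑ i : Fin N, ∑ _k : Fin N,
      (if i.1 ∈ ({0, N - 1} : Finset ℕ) then (1 : ℝ) else 0) ≤ N * 2 := by
    simp only [Finset.sum_const, nsmul_eq_mul, Finset.card_univ, Fintype.card_fin]
    rw [← Finset.mul_sum]
    refine mul_le_mul_of_nonneg_left ((sum_indicator_le _ _).trans ?_) (Nat.cast_nonneg N)
    exact_mod_cast (Finset.card_insert_le _ _).trans (by simp)
  simp only [Finset.sum_const, nsmul_eq_mul, Finset.card_univ, Fintype.card_fin] at s1
  simp only [Finset.sum_const, nsmul_eq_mul, Finset.card_univ, Fintype.card_fin] at s2 ⊢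
  linarith

/-- Lower bound on the activity under `g² ν`. The part of `g` orthogonal to constants loses at most
`𝔸N` because rates are nonnegative; the rest is controlled by the variance of the activity, with
`τ` a free parameter of Young's inequality. -/
lemma neg_expect_tact_le {ρ : ℝ} (h0 : 0 < ρ) (h1 : ρ < 1) (m : KCM) {N : ℕ} (hN : 0 < N)
    (g : Config N → ℝ) (hg : expect ρ (fun η => g η ^ 2) = 1) {τ : ℝ} (hτ : 0 < τ) :
    -expect ρ (fun η => g η ^ 2 * tact m ρ η) ≤
      (meanAct m ρ * N + τ * N) * (1 - expect ρ g ^ 2) + (τ * N + 14 / τ) := by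
  set q := expect ρ g with hq
  have hNr : (0 : ℝ) < N := by exact_mod_cast hN
  have hτN : 0 < τ * N := by positivity
  have hvar : expect ρ (fun η => (g η - q) ^ 2) = 1 - q ^ 2 := by
    have : (fun η => (g η - q) ^ 2) = fun η => g η ^ 2 + ((-2 * q) * g η + q ^ 2) := by
      ext ζ; ring
    rw [this, nu_add, nu_add, nu_const_mul, nu_const, ← hq, hg]
    ring
  have hv0 : 0 ≤ expect ρ (fun η => (g η - q) ^ 2) := nu_nonneg h0 h1 fun _ => sq_nonneg _
  have hlow : ∀ η : Config N, -tact m ρ η ≤ meanAct m ρ * N := by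
    intro η
    have h := escRate_eq m ρ η
    have : 0 ≤ escRate m ρ η := Finset.sum_nonneg fun i _ => crate_nonneg h0 h1 m η i
    linarith
  have hb : expect ρ (fun η => -1 * (g η ^ 2 * tact m ρ η)) ≤
      expect ρ (fun η => (meanAct m ρ * N + τ * N) * (g η - q) ^ 2 +
        (q ^ 2 * (τ * N) + (q ^ 2 * (2 / (τ * N))) * tact m ρ η ^ 2)) := by
    refine nu_mono h0 h1 fun η => ?_
    set Z := tact m ρ η
    set h := g η - q with hh
    have hgη : g η = q + h := by rw [hh]; ring
    have a1 : h ^ 2 * (-Z) ≤ h ^ 2 * (meanAct m ρ * N) :=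
      mul_le_mul_of_nonneg_left (hlow η) (sq_nonneg _)
    set t := τ * (N : ℝ) with ht
    have a2 : -(2 * q * h * Z) ≤ t * h ^ 2 + q ^ 2 * (Z ^ 2 / t) := by
      have : t * h ^ 2 + q ^ 2 * (Z ^ 2 / t) + 2 * q * h * Z = (t * h + q * Z) ^ 2 / t := by
        field_simp; ring
      have h2 : 0 ≤ (t * h + q * Z) ^ 2 / t := by positivity
      linarith
    have a3 : -Z ≤ t + Z ^ 2 / t := by
      have : t + Z ^ 2 / t + Z = ((t + Z / 2) ^ 2 + 3 / 4 * Z ^ 2) / t := by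
        field_simp; ring
      have h2 : 0 ≤ ((t + Z / 2) ^ 2 + 3 / 4 * Z ^ 2) / t := by positivity
      linarith
    have a4 := mul_le_mul_of_nonneg_left a3 (sq_nonneg q)
    have e : q ^ 2 * (2 / t) * Z ^ 2 = 2 * (q ^ 2 * (Z ^ 2 / t)) := by ring
    rw [e, hgη]
    nlinarith
  rw [nu_const_mul, nu_add, nu_add, nu_const_mul, nu_const_mul, nu_const, hvar,
    nu_const_mul ρ] at hb
  have hZ := expect_tact_sq_le h0 h1 m N
  have hq1 : q ^ 2 ≤ 1 := by linarith [hvar ▸ hv0]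
  have b1 : q ^ 2 * (2 / (τ * N)) * expect ρ (fun η : Config N => tact m ρ η ^ 2) ≤
      q ^ 2 * (2 / (τ * N)) * (7 * N) := mul_le_mul_of_nonneg_left hZ (by positivity)
  have b2 : q ^ 2 * (2 / (τ * N)) * (7 * N) = q ^ 2 * (14 / τ) := by field_simp; ring
  have b3 : q ^ 2 * (τ * N) + q ^ 2 * (14 / τ) ≤ τ * N + 14 / τ := by
    rw [← mul_add]
    exact mul_le_of_le_one_left (by positivity) hq1
  linarith

lemma dirichlet_gapModel_le {ρ : ℝ} (h0 : 0 < ρ) (h1 : ρ < 1) (m : KCM) {N : ℕ}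
    (g : Config N → ℝ) : dirichlet (gapModel m) ρ g ≤ dirichlet m ρ g := by
  cases m
  · exact le_rfl
  · refine Finset.sum_le_sum fun i _ => nu_mono h0 h1 fun η =>
      mul_le_mul_of_nonneg_right ?_ (sq_nonneg _)
    refine mul_le_mul_of_nonneg_right ?_ (by split_ifs <;> linarith)
    simp only [gapModel, constr]
    have : occAt η 0 0 i.1 ≤ occAt η 1 0 i.1 := by
      unfold occAt
      split_ifs <;> norm_num
    have e : occAt η 0 0 (i.1 + 2) = occAt η 1 0 (i.1 + 2) := by simp [occAt]
    rw [e]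
    linarith [mul_le_mul_of_nonneg_right this
      (occAt_nonneg η (zero_le_one (α := ℝ)) (le_refl (0 : ℝ)) (i.1 + 2))]
  · exact le_rfl

lemma dirichlet_nonneg {ρ : ℝ} (h0 : 0 < ρ) (h1 : ρ < 1) (m : KCM) {N : ℕ}
    (g : Config N → ℝ) : 0 ≤ dirichlet m ρ g :=
  Finset.sum_nonneg fun i _ => nu_nonneg h0 h1 fun η => grad_nonneg h0 h1 m g i η

/-! ### The two signs of `α` -/

/-- It is enough to bound the variational functional at every normalised `g = √f`. -/
lemma phi_le {ρ : ℝ} (m : KCM) {N : ℕ} {lam b : ℝ}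
    (h : ∀ g : Config N → ℝ, expect ρ (fun η => g η ^ 2) = 1 →
      (Real.exp lam - 1) * (meanAct m ρ * N + expect ρ (fun η => g η ^ 2 * tact m ρ η)) -
        Real.exp lam * dirichlet m ρ g ≤ b) : phi m ρ N lam ≤ b := by
  refine csSup_le ⟨_, fun _ => 1, fun _ => zero_le_one, nu_const ρ N 1, rfl⟩ ?_
  rintro x ⟨f, hf0, hf1, rfl⟩
  have hsq : ∀ η, Real.sqrt (f η) ^ 2 = f η := fun η => Real.sq_sqrt (hf0 η)
  have h2 := h (fun η => Real.sqrt (f η)) (by simpa only [hsq] using hf1)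
  simp only [hsq] at h2
  have e : expect ρ (fun η => f η * escRate m ρ η) =
      meanAct m ρ * N + expect ρ (fun η => f η * tact m ρ η) := by
    simp only [escRate_eq, mul_add]
    rw [nu_add]
    congr 1
    have : (fun η => f η * (meanAct m ρ * N)) = fun η => (meanAct m ρ * N) * f η := by
      ext; ring
    rw [this, nu_const_mul, hf1, mul_one]
  rw [e]
  exact h2

lemma exp_sub_one_le {x : ℝ} (h : |x| ≤ 1) : Real.exp x - 1 ≤ x + x ^ 2 := by
  have := (abs_le.1 (Real.abs_exp_sub_one_sub_id_le h)).2
  linarith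

lemma phi_le_of_pos {ρ : ℝ} (h0 : 0 < ρ) (h1 : ρ < 1) (m : KCM) {S : ℝ} (hS : 0 < S)
    (hgap : ∀ (M : ℕ) (g : Config M → ℝ),
      S * (expect ρ (fun σ => g σ ^ 2) - (expect ρ g) ^ 2) ≤ dirichlet (gapModel m) ρ g)
    {α δ : ℝ} (hα : 0 < α) (hδ : 0 < δ) :
    ∃ N0 : ℕ, ∀ N : ℕ, N0 ≤ N → phi m ρ N (α / N) ≤ meanAct m ρ * α + δ := by
  -- `K` makes the `O(1)` error per block at most `δ/2` in total; the three terms of the lower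
  -- bound on `N` make `α/N ≤ 1`, let the Dirichlet form absorb its multiple, and make the `O(1/N)`
  -- terms at most `δ/2`.
  obtain ⟨K, hKlt⟩ := exists_nat_gt (24 * α / δ)
  have hKr : (0 : ℝ) < K := lt_trans (by positivity) hKlt
  have hK : 0 < K := by exact_mod_cast hKr
  obtain ⟨N0, hN0⟩ := exists_nat_gt
    (α + 2 * α * (((K : ℝ) ^ 2 + K) / S) + 2 * (α ^ 2 + 12 * α) / δ)
  refine ⟨N0, fun N hN => phi_le m fun g hg => ?_⟩
  have hNr : α + 2 * α * (((K : ℝ) ^ 2 + K) / S) + 2 * (α ^ 2 + 12 * α) / δ < N :=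
    hN0.trans_le (by exact_mod_cast hN)
  have p1 : 0 < 2 * α * (((K : ℝ) ^ 2 + K) / S) := by positivity
  have p2 : 0 < 2 * (α ^ 2 + 12 * α) / δ := by positivity
  have hNpos : (0 : ℝ) < N := by linarith
  set L := ((K : ℝ) ^ 2 + K) / S with hL
  have hL0 : 0 < L := by positivity
  set x := α / (N : ℝ) with hx
  have hx0 : 0 < x := by positivity
  have hx1 : x ≤ 1 := by rw [hx, div_le_one hNpos]; linarith
  have hxN : x * N = α := by rw [hx]; field_simp
  have hμ : Real.exp x - 1 ≤ x + x ^ 2 := exp_sub_one_le (by rw [abs_of_pos hx0]; exact hx1)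
  have hμ0 : 0 ≤ Real.exp x - 1 := by linarith [Real.add_one_le_exp x]
  set μ := Real.exp x - 1 with hμdef
  have hexp : Real.exp x = 1 + μ := by rw [hμdef]; ring
  have hμ2 : μ ≤ 2 * x := by nlinarith
  have hD := dirichlet_nonneg h0 h1 m g
  have hA0 := meanAct_pos h0 h1 m
  have hA1 := meanAct_le_one h0 h1 m
  have hmain := mul_le_mul_of_nonneg_left (expect_tact_le h0 h1 m hS hgap hK g hg) hμ0
  have c1 : μ * L ≤ 1 := by
    have : 2 * x * L ≤ 1 := by
      rw [hx, show 2 * (α / (N : ℝ)) * L = 2 * α * L / N by ring, div_le_one hNpos]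
      linarith
    nlinarith
  have c2 : μ * (meanAct m ρ * N) ≤ meanAct m ρ * α + α * x := by
    have : μ * N ≤ α + α * x := by
      have := mul_le_mul_of_nonneg_right hμ hNpos.le
      nlinarith
    have hαx : 0 < α * x := by positivity
    nlinarith
  have c3 : μ * (6 * ((N : ℝ) / K + 1)) ≤ δ / 2 + 12 * x := by
    have q1 : μ * (6 * ((N : ℝ) / K + 1)) ≤ 2 * x * (6 * ((N : ℝ) / K + 1)) :=
      mul_le_mul_of_nonneg_right hμ2 (by positivity)
    have q2 : 2 * x * (6 * ((N : ℝ) / K + 1)) = 12 * α / K + 12 * x := by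
      rw [← hxN]; ring
    have q3 : 12 * α / K ≤ δ / 2 := by
      rw [div_lt_iff₀ hδ] at hKlt
      rw [div_le_iff₀ hKr]
      linarith
    linarith
  have c4 : α * x + 12 * x ≤ δ / 2 := by
    have : α * x + 12 * x = (α ^ 2 + 12 * α) / N := by rw [hx]; ring
    rw [this, div_le_iff₀ hNpos]
    have : 2 * (α ^ 2 + 12 * α) / δ ≤ N := by linarith
    rw [div_le_iff₀ hδ] at this
    linarith
  have c5 : μ * (L * dirichlet m ρ g) ≤ dirichlet m ρ g := by
    rw [← mul_assoc]
    exact mul_le_of_le_one_left hD c1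
  have c6 : 0 ≤ μ * dirichlet m ρ g := mul_nonneg hμ0 hD
  rw [hexp]
  linarith

lemma phi_le_of_nonpos {ρ : ℝ} (h0 : 0 < ρ) (h1 : ρ < 1) (m : KCM) {S : ℝ} (hS : 0 < S)
    (hgap : ∀ (M : ℕ) (g : Config M → ℝ),
      S * (expect ρ (fun σ => g σ ^ 2) - (expect ρ g) ^ 2) ≤ dirichlet (gapModel m) ρ g)
    {α δ : ℝ} (hα : α ≤ 0) (hαS : -S / (4 * meanAct m ρ) < α) (hδ : 0 < δ) :
    ∃ N0 : ℕ, ∀ N : ℕ, N0 ≤ N → phi m ρ N (α / N) ≤ meanAct m ρ * α + δ := by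
  have hA0 := meanAct_pos h0 h1 m
  have hA1 := meanAct_le_one h0 h1 m
  obtain ⟨a, rfl⟩ : ∃ a, α = -a := ⟨-α, by ring⟩
  have ha : 0 ≤ a := by linarith
  have haS : a * meanAct m ρ ≤ S / 4 := by
    rw [div_lt_iff₀ (by positivity)] at hαS
    linarith
  -- `τ` is small enough for `aτ` to fit both in the error and in the remaining part of the gap.
  obtain ⟨τ, hτ, hτS, hτδ⟩ : ∃ τ : ℝ, 0 < τ ∧ a * τ ≤ S / 4 ∧ a * τ ≤ δ / 2 := by
    have hmin : 0 < min (S / 4) (δ / 2) := lt_min (by positivity) (by positivity)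
    refine ⟨min (S / 4) (δ / 2) / (a + 1), by positivity, ?_, ?_⟩
    all_goals
      have : a * (min (S / 4) (δ / 2) / (a + 1)) ≤ min (S / 4) (δ / 2) := by
        rw [mul_div_assoc', div_le_iff₀ (by positivity)]
        nlinarith
    · exact this.trans (min_le_left _ _)
    · exact this.trans (min_le_right _ _)
  obtain ⟨N0, hN0⟩ := exists_nat_gt (1 + 2 * a + 2 * (a ^ 2 + a * (14 / τ)) / δ)
  refine ⟨N0, fun N hN => phi_le m fun g hg => ?_⟩
  have hNr : 1 + 2 * a + 2 * (a ^ 2 + a * (14 / τ)) / δ < N :=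
    hN0.trans_le (by exact_mod_cast hN)
  have p2 : 0 ≤ 2 * (a ^ 2 + a * (14 / τ)) / δ := by positivity
  have hNpos : (0 : ℝ) < N := by linarith
  set y := a / (N : ℝ) with hy
  have hxy : -a / (N : ℝ) = -y := by rw [hy]; ring
  rw [hxy]
  have hy0 : 0 ≤ y := by positivity
  have hyh : y ≤ 1 / 2 := by rw [hy, div_le_iff₀ hNpos]; linarith
  have hyN : y * N = a := by rw [hy]; field_simp
  have hup : Real.exp (-y) - 1 ≤ -y + (-y) ^ 2 :=
    exp_sub_one_le (by rw [abs_neg, abs_of_nonneg hy0]; linarith)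
  have hlo := Real.add_one_le_exp (-y)
  set ε := Real.exp (-y) with hε
  have hμ0 : 0 ≤ 1 - ε := by
    rw [hε]
    linarith [Real.exp_le_one_iff.2 (neg_nonpos.2 hy0)]
  have hμy : 1 - ε ≤ y := by linarith
  set w := 1 - expect ρ g ^ 2 with hw
  have hSw : S * w ≤ dirichlet m ρ g := by
    have := (hgap N g).trans (dirichlet_gapModel_le h0 h1 m g)
    rwa [hg] at this
  have hw0 : 0 ≤ w := by
    have hvar : expect ρ (fun η => (g η - expect ρ g) ^ 2) = w := by
      have : (fun η => (g η - expect ρ g) ^ 2) =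
          fun η => g η ^ 2 + ((-2 * expect ρ g) * g η + expect ρ g ^ 2) := by
        ext ζ; ring
      rw [this, nu_add, nu_add, nu_const_mul, nu_const, hg]
      ring
    rw [← hvar]
    exact nu_nonneg h0 h1 fun _ => sq_nonneg _
  have hmain := neg_expect_tact_le h0 h1 m (by exact_mod_cast hNpos) g hg hτ
  rw [← hw] at hmain
  set R := (meanAct m ρ * N + τ * N) * w + (τ * N + 14 / τ) with hR
  have hR0 : 0 ≤ R := by positivity
  have c1 : (1 - ε) * -expect ρ (fun η => g η ^ 2 * tact m ρ η) ≤ y * R :=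
    (mul_le_mul_of_nonneg_left hmain hμ0).trans (mul_le_mul_of_nonneg_right hμy hR0)
  have c2 : y * R = (a * meanAct m ρ + a * τ) * w + a * τ + y * (14 / τ) := by
    rw [hR, ← hyN]; ring
  have c3 : (a * meanAct m ρ + a * τ) * w ≤ S / 2 * w :=
    mul_le_mul_of_nonneg_right (by linarith) hw0
  have c4 : S / 2 * w ≤ ε * dirichlet m ρ g := by
    have e1 : (1 : ℝ) / 2 ≤ ε := by linarith
    have hSw0 : 0 ≤ S * w := by positivity
    have := mul_le_mul e1 hSw hSw0 (by linarith)
    linarith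
  have c5 : (ε - 1) * (meanAct m ρ * N) ≤ meanAct m ρ * -a + a * y := by
    have := mul_le_mul_of_nonneg_right hup hNpos.le
    have h3 : (-y + (-y) ^ 2) * N = -a + a * y := by rw [← hyN]; ring
    have hay : 0 ≤ a * y := by positivity
    have h4 := mul_le_mul_of_nonneg_left (this.trans h3.le) hA0.le
    have h5 : meanAct m ρ * (a * y) ≤ a * y := mul_le_of_le_one_left hay hA1
    linarith
  have c6 : a * y + y * (14 / τ) ≤ δ / 2 := by
    have : a * y + y * (14 / τ) = (a ^ 2 + a * (14 / τ)) / N := by rw [hy]; ring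
    rw [this, div_le_iff₀ hNpos]
    have : 2 * (a ^ 2 + a * (14 / τ)) / δ ≤ N := by linarith
    rw [div_le_iff₀ hδ] at this
    linarith
  have c7 : (ε - 1) * (meanAct m ρ * N + expect ρ (fun η => g η ^ 2 * tact m ρ η)) =
      (ε - 1) * (meanAct m ρ * N) + (1 - ε) * -expect ρ (fun η => g η ^ 2 * tact m ρ η) := by
    ring
  rw [c7]
  linarith
/-- **Proposition 5.1** (quantitative active-regime upper bound, conditional on
the spectral gap). For the East or FA-1f model in dimension 1 at density
`ρ ∈ (0,1)`, assuming a uniform spectral gap lower bound `S > 0` for the model on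
finite intervals with empty right boundary condition: there exists `C < ∞` such
that for every `δ > 0` and every `α > α₀ = −S/(4𝔸)` there is `N̄` such that for
all `N ≥ N̄`, `φ^{(N)}(α/N) ≤ 𝔸α + Cδ + C|α|/√N + Cα²/√N`. -/
theorem active_regime_quantitative_upper_bound (ρ : ℝ) (hρ0 : 0 < ρ) (hρ1 : ρ < 1)
    (m : KCM) (S : ℝ) (hS0 : 0 < S)
    (hgap : ∀ (M : ℕ) (g : Config M → ℝ),
      S * (expect ρ (fun σ => g σ ^ 2) - (expect ρ g) ^ 2)
        ≤ dirichlet (gapModel m) ρ g) :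
    ∃ C : ℝ, ∀ δ : ℝ, 0 < δ → ∀ α : ℝ, -S / (4 * meanAct m ρ) < α →
      ∃ Nbar : ℕ, ∀ N : ℕ, Nbar ≤ N →
        phi m ρ N (α / N) ≤ meanAct m ρ * α + C * δ
          + C * |α| / Real.sqrt N + C * α ^ 2 / Real.sqrt N := by
  refine ⟨1, fun δ hδ α hα => ?_⟩
  have key : ∃ N0 : ℕ, ∀ N : ℕ, N0 ≤ N → phi m ρ N (α / N) ≤ meanAct m ρ * α + δ := by
    rcases lt_or_ge 0 α with h | h
    · exact phi_le_of_pos hρ0 hρ1 m hS0 hgap h hδ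
    · exact phi_le_of_nonpos hρ0 hρ1 m hS0 hgap h hα hδ
  obtain ⟨N0, hN0⟩ := key
  refine ⟨N0, fun N hN => (hN0 N hN).trans ?_⟩
  have h1 : 0 ≤ 1 * |α| / Real.sqrt N := by positivity
  have h2 : 0 ≤ 1 * α ^ 2 / Real.sqrt N := by positivity
  linarith
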